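/- Let w ∈ W̃ be an f-cycle of length n of the form w = t_1^a t_n^b z, where z is the cyclic permutation (1,2,…,n) ∈ 𝔖_n and a+b ≡ f (mod p). Then for each 0 ≤ j < p, Tr(Dτ^j w, V^{⊗n}) = h·ζ^{−(f+b)jd}·p^{(f)}_{n/h}(𝒳_j) if h divides n and h divides f (where h = h_j), and Tr(Dτ^j w, V^{⊗n}) = 0 otherwise. -/

import Mathlib

/-!
Common framework for formalizing T. Shoji, "Green functions associated to
complex reflection groups, II" (arXiv:math/0105053).

We model:
* `e`-partitions of `n` as functions `ZMod e → Multiset ℕ`;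
* the complex reflection group `W̃ = G(e,1,n)` as the semidirect product
  `(Fin n → Multiplicative (ZMod e)) ⋊ Equiv.Perm (Fin n)`, and
  `W = G(e,p,n)` as the kernel of the mod-`p` sum character;
* the tensor space `V^{⊗n}` concretely via matrices indexed by
  `Fin n → (Σ k : ZMod e, Fin (m k))`;
* symmetric functions in the (finitely many, `m k ≥ n`) variables
  `x_i^{(k)}` in evaluated form, i.e. as functions of an assignment
  `xv : (Σ k : ZMod e, Fin (m k)) → ℂ`.
-/

open scoped BigOperators

attribute [local instance] Classical.propDecidable

namespace GreenII

/-! ## Combinatorics of e-partitions -/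

/-- An `e`-partition of `n`: a tuple of partitions (multisets of positive
integers) indexed by `ZMod e`, with total size `n`. -/
def IsEPartition (e : ℕ) [NeZero e] (n : ℕ) (α : ZMod e → Multiset ℕ) : Prop :=
  (∀ k, ∀ x ∈ α k, 0 < x) ∧ (∑ k : ZMod e, (α k).sum) = n

/-- The shift operator `θ = θ_p`, `θ(α)^{(k)} = α^{(k-d)}`. -/
def theta (e : ℕ) [NeZero e] (d : ℕ) (α : ZMod e → Multiset ℕ) : ZMod e → Multiset ℕ :=
  fun k => α (k - (d : ZMod e))

/-- `c_{α,p}`: the size of the `θ`-orbit of `α`. -/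
noncomputable def csize (e : ℕ) [NeZero e] (d : ℕ) (α : ZMod e → Multiset ℕ) : ℕ :=
  Function.minimalPeriod (theta e d) α

/-- `Δ(α) = ∑_k k · l(α^{(k)})`. -/
def Delta (e : ℕ) [NeZero e] (α : ZMod e → Multiset ℕ) : ℕ :=
  ∑ k : ZMod e, k.val * (α k).card

/-- `l(α) = ∑_k l(α^{(k)})`, the total number of parts. -/
def lenE (e : ℕ) [NeZero e] (α : ZMod e → Multiset ℕ) : ℕ :=
  ∑ k : ZMod e, (α k).card

/-- `α` and `β` lie in the same `θ`-orbit. -/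
def SameOrbit (e : ℕ) [NeZero e] (d : ℕ) (α β : ZMod e → Multiset ℕ) : Prop :=
  ∃ i, (theta e d)^[i] α = β

/-! ## The groups `W̃ = G(e,1,n)` and `W = G(e,p,n)` -/

/-- The "diagonal" part of `G(e,1,n)`. -/
abbrev NC (e n : ℕ) := Fin n → Multiplicative (ZMod e)

/-- The permutation action of `𝔖_n` on the diagonal part. -/
def permAut (e n : ℕ) (x : Equiv.Perm (Fin n)) : NC e n ≃* NC e n where
  toFun f := f ∘ ⇑x.symm
  invFun f := f ∘ ⇑x
  left_inv f := by funext i; simp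
  right_inv f := by funext i; simp
  map_mul' f g := rfl

def permHom (e n : ℕ) : Equiv.Perm (Fin n) →* MulAut (NC e n) where
  toFun x := permAut e n x
  map_one' := rfl
  map_mul' x y := rfl

/-- `W̃ = G(e,1,n) ≅ (ℤ/eℤ)^n ⋊ 𝔖_n`, with `w = x(a_1,…,a_n)` recorded as
`⟨(a_i), x⟩`. -/
abbrev Wt (e n : ℕ) := NC e n ⋊[permHom e n] Equiv.Perm (Fin n)

noncomputable instance WtFintype (e n : ℕ) [NeZero e] : Fintype (Wt e n) :=
  Fintype.ofEquiv (NC e n × Equiv.Perm (Fin n))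
    { toFun := fun x => ⟨x.1, x.2⟩
      invFun := fun x => (x.left, x.right)
      left_inv := fun _ => rfl
      right_inv := fun _ => rfl }

/-- The character `w ↦ ∑ a_i mod p` of `W̃`. -/
noncomputable def wsumHom (e p n : ℕ) (hp : p ∣ e) : Wt e n →* Multiplicative (ZMod p) where
  toFun w := Multiplicative.ofAdd (∑ i, ZMod.castHom hp (ZMod p) (w.left i).toAdd)
  map_one' := by simp
  map_mul' w w' := by
    have h : ∀ i, ((w * w').left i).toAdd
        = (w.left i).toAdd + (w'.left (w.right.symm i)).toAdd := fun _ => rfl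
    simp only [h, map_add, Finset.sum_add_distrib, ofAdd_add]
    congr 2
    exact Equiv.sum_comp w.right.symm
      (fun i => ZMod.castHom hp (ZMod p) ((w'.left i).toAdd))

/-- `W = G(e,p,n)`: the subgroup of `W̃` on which `∑ a_i ≡ 0 (mod p)`. -/
noncomputable def Wgrp (e p n : ℕ) (hp : p ∣ e) : Subgroup (Wt e n) :=
  (wsumHom e p n hp).ker

/-- `σ = t_1 ∈ W̃`. -/
def sigmaElt (e n : ℕ) [NeZero n] : Wt e n :=
  SemidirectProduct.inl (fun i => Multiplicative.ofAdd (if i = (0 : Fin n) then (1 : ZMod e) else 0))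

/-- membership in the coset `σ^q W`. -/
def inCoset (e p n : ℕ) [NeZero n] (hp : p ∣ e) (q : ℕ) (w : Wt e n) : Prop :=
  ∃ u ∈ Wgrp e p n hp, w = (sigmaElt e n) ^ q * u

/-- conjugacy under `W`. -/
def IsConjW (e p n : ℕ) (hp : p ∣ e) (w w' : Wt e n) : Prop :=
  ∃ u ∈ Wgrp e p n hp, u * w * u⁻¹ = w'

/-- The `e`-partition recording the conjugacy class of `w ∈ W̃`:
a `k`-cycle of length `l` (a cycle of the underlying permutation whose
accumulated `ZMod e`-color is `k`, fixed points counting as `1`-cycles)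
contributes a part `l` to the `k`-th component. -/
noncomputable def classOf (e n : ℕ) [NeZero e] (w : Wt e n) : ZMod e → Multiset ℕ := fun k =>
  ((w.right.cycleFactorsFinset.val.filter
      (fun c => (∑ i ∈ c.support, (w.left i).toAdd) = k)).map fun c => c.support.card)
    + Multiset.replicate
        ((Finset.univ.filter fun i : Fin n => w.right i = i ∧ (w.left i).toAdd = k).card) 1

/-! ### The standard class representative `w_α(b)` -/

/-- The list of (part, color) pairs of an `e`-partition. -/
noncomputable def partsList (e : ℕ) [NeZero e] (α : ZMod e → Multiset ℕ) : List (ℕ × ZMod e) :=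
  (Finset.univ : Finset (ZMod e)).toList.flatMap fun k => (α k).toList.map fun r => (r, k)

/-- the color datum of `w_α(b)`: each cycle carries its color at its first
point, except the first (exceptional) cycle, which carries `k - b` at its
first point and `b` at its last point. -/
noncomputable def aexc (e : ℕ) [NeZero e] (L : List (ℕ × ZMod e)) (b : ZMod e) :
    (Σ i : Fin L.length, Fin (L.get i).1) → ZMod e := fun x =>
  if (x.1 : ℕ) = 0 then
    (if (x.2 : ℕ) = 0 then (L.get x.1).2 - b else 0)
      + (if (x.2 : ℕ) = (L.get x.1).1 - 1 then b else 0)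
  else if (x.2 : ℕ) = 0 then (L.get x.1).2 else 0

/-- The standard representative `w_α(b) ∈ W̃` of the paper, 2.6: a product of
disjoint cycles matching `α`, of the form `t_{i_1}^k z` except for one
exceptional cycle `t_{i_1}^{k-b} t_{i_m}^{b} z`. -/
noncomputable def wrep (e n : ℕ) [NeZero e] (α : ZMod e → Multiset ℕ) (b : ZMod e) : Wt e n :=
  if hcard : Fintype.card (Σ i : Fin (partsList e α).length, Fin ((partsList e α).get i).1) = n then
    let φ := Fintype.equivFinOfCardEq hcard
    ⟨fun t => Multiplicative.ofAdd (aexc e (partsList e α) b (φ.symm t)),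
      φ.symm.trans ((Equiv.sigmaCongrRight fun _ => finRotate _).trans φ)⟩
  else 1

/-! ## The tensor space `V^{⊗n}` -/

/-- Basis index of `V = ⊕_k V_k`, `dim V_k = m k`. -/
abbrev BIdx (e : ℕ) [NeZero e] (m : ZMod e → ℕ) := Σ k : ZMod e, Fin (m k)

/-- Basis index of `V^{⊗n}`. -/
abbrev TIdx (e n : ℕ) [NeZero e] (m : ZMod e → ℕ) := Fin n → BIdx e m

/-- `ζ` raised to a `ZMod e` exponent. -/
noncomputable def zmpow (e : ℕ) [NeZero e] (ζ : ℂ) (c : ZMod e) : ℂ := ζ ^ c.val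

/-- the matrix of `w ∈ W̃` on `V^{⊗n}` (𝔖_n permutes the factors, and
`t_k` multiplies by `ζ^j` if the `k`-th factor lies in `V_j`). -/
noncomputable def rhoMat (e n : ℕ) [NeZero e] (ζ : ℂ) (m : ZMod e → ℕ) (w : Wt e n) :
    Matrix (TIdx e n m) (TIdx e n m) ℂ := fun b' b =>
  if b' = b ∘ ⇑w.right.symm then ∏ s, ζ ^ (((w.left s).toAdd.val) * (b' s).1.val) else 0

/-- The operator `D` (multiplication by `x_{i_1} ⋯ x_{i_n}`), with the
variables evaluated via `xv`. -/
noncomputable def Dmat (e n : ℕ) [NeZero e] (m : ZMod e → ℕ) (xv : BIdx e m → ℂ) :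
    Matrix (TIdx e n m) (TIdx e n m) ℂ :=
  Matrix.diagonal fun b => ∏ s, xv (b s)

/-- `τ` on the basis of `V`: `v_j^{(k)} ↦ v_j^{(k+d)}` (uses `m (k+d) = m k`). -/
def tauB (e : ℕ) [NeZero e] (d : ℕ) (m : ZMod e → ℕ) (hm : ∀ k, m (k + (d : ZMod e)) = m k) :
    BIdx e m → BIdx e m := fun b => ⟨b.1 + (d : ZMod e), Fin.cast (hm b.1).symm b.2⟩

/-- `g ↦ g^{⊗ n}`: the matrix of `g ∈ End V` acting diagonally on `V^{⊗n}`. -/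
noncomputable def tensorPow (e n : ℕ) [NeZero e] (m : ZMod e → ℕ)
    (g : Matrix (BIdx e m) (BIdx e m) ℂ) : Matrix (TIdx e n m) (TIdx e n m) ℂ :=
  Matrix.of fun b' b => ∏ s, g (b' s) (b s)

/-- the matrix of `τ` on `V`. -/
noncomputable def tauV (e : ℕ) [NeZero e] (d : ℕ) (m : ZMod e → ℕ)
    (hm : ∀ k, m (k + (d : ZMod e)) = m k) : Matrix (BIdx e m) (BIdx e m) ℂ :=
  fun b' b => if b' = tauB e d m hm b then 1 else 0

/-- the matrix of `τ` on `V^{⊗n}`. -/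
noncomputable def tauMat (e n : ℕ) [NeZero e] (d : ℕ) (m : ZMod e → ℕ)
    (hm : ∀ k, m (k + (d : ZMod e)) = m k) : Matrix (TIdx e n m) (TIdx e n m) ℂ :=
  tensorPow e n m (tauV e d m hm)

/-- a member of `G = GL_{m_0} × ⋯ × GL_{m_{e-1}}` (as an endomorphism of V,
invertibility stated separately). -/
def IsBlockDiag (e : ℕ) [NeZero e] (m : ZMod e → ℕ) (g : Matrix (BIdx e m) (BIdx e m) ℂ) : Prop :=
  ∀ b b' : BIdx e m, b.1 ≠ b'.1 → g b b' = 0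

/-- a block upper unitriangular matrix (product of root subgroups for the
positive roots of `G`). -/
def IsUpperUni (e : ℕ) [NeZero e] (m : ZMod e → ℕ) (g : Matrix (BIdx e m) (BIdx e m) ℂ) : Prop :=
  (∀ b, g b b = 1) ∧
    ∀ b b' : BIdx e m, b ≠ b' → ¬(b.1 = b'.1 ∧ b.2.val < b'.2.val) → g b b' = 0

/-! ## Symmetric functions (evaluated form) -/

/-- value of the variable `x_i^{(k)}` under the assignment `xv` (junk `0` out
of range). -/
noncomputable def xval (e : ℕ) [NeZero e] (m : ZMod e → ℕ) (xv : BIdx e m → ℂ)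
    (k : ZMod e) (i : ℕ) : ℂ :=
  if h : i < m k then xv ⟨k, ⟨i, h⟩⟩ else 0

/-- `h_j`: the order of the image of `j` in `ℤ/pℤ`. -/
noncomputable def hOrd (p j : ℕ) : ℕ := addOrderOf ((j : ZMod p))

/-- `j₁ d` where `j₁ = p / h_j`: the number of components of the variable
system `𝒳_j`. -/
noncomputable def Esys (p d j : ℕ) : ℕ := (p / hOrd p j) * d

/-- the variable `X_i^{(k)} = x_i^{(k)} x_i^{(k+jd)} ⋯ x_i^{(k+(h_j-1)jd)}`
of the system `𝒳_j`. -/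
noncomputable def Xvar (e : ℕ) [NeZero e] (p d : ℕ) (m : ZMod e → ℕ) (xv : BIdx e m → ℂ)
    (j k i : ℕ) : ℂ :=
  ∏ s ∈ Finset.range (hOrd p j), xval e m xv (((k + s * j * d : ℕ) : ZMod e)) i

/-- number of variables in the `k`-th component of any of the systems `𝒳_j`. -/
noncomputable def mmX (e : ℕ) [NeZero e] (m : ZMod e → ℕ) : ℕ → ℕ := fun k => m ((k : ℕ) : ZMod e)

/-- The variables of the system `𝒳_j`, as a doubly indexed family. -/
noncomputable def vvX (e : ℕ) [NeZero e] (p d : ℕ) (m : ZMod e → ℕ) (xv : BIdx e m → ℂ)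
    (j : ℕ) : ℕ → ℕ → ℂ := fun k i => Xvar e p d m xv j k i

/-- complete homogeneous symmetric polynomial `h_r` in `N` variables. -/
noncomputable def hcomp (N r : ℕ) (v : ℕ → ℂ) : ℂ :=
  ∑ c ∈ Finset.Nat.antidiagonalTuple N r, ∏ i : Fin N, v i ^ c i

/-- the parts of a partition in decreasing order (`0` beyond the length). -/
noncomputable def lamOf (μ : Multiset ℕ) (i : ℕ) : ℕ := ((μ.sort (· ≤ ·)).reverse).getD i 0

/-- Schur polynomial in `N` variables (Jacobi–Trudi). -/
noncomputable def schurFin (N : ℕ) (μ : Multiset ℕ) (v : ℕ → ℂ) : ℂ :=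
  Matrix.det (Matrix.of fun i j : Fin N =>
    if h : (0 : ℤ) ≤ (lamOf μ i + j : ℤ) - i then hcomp N ((lamOf μ i + j : ℤ) - i).toNat v
    else 0)

/-- monomial symmetric polynomial in `N` variables. -/
noncomputable def monoFin (N : ℕ) (μ : Multiset ℕ) (v : ℕ → ℂ) : ℂ :=
  ∑ c ∈ (Finset.Nat.antidiagonalTuple N μ.sum).filter
      (fun c => ((List.ofFn c : List ℕ) : Multiset ℕ).filter (fun x => 0 < x) = μ),
    ∏ i : Fin N, v i ^ c i

/-! ### generic families for a variable system with `E` components -/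

/-- `p_r^{(i)} = ∑_{k<E} u^{ik} p_r(x^{(k)})` (formula (2.2.2)/(2.4.2), with
`u` a primitive `E`-th root of unity), for the system of variables
`vv k i` (`k < E`, `i < mm k`); `p_0^{(i)} = 1`. -/
noncomputable def pGenSys (u : ℂ) (E : ℕ) (mm : ℕ → ℕ) (vv : ℕ → ℕ → ℂ) (i r : ℕ) : ℂ :=
  if r = 0 then 1 else ∑ k ∈ Finset.range E, u ^ (i * k) * ∑ s ∈ Finset.range (mm k), vv k s ^ r

/-- the power sum `p_γ` of an `E`-tuple of partitions (2.2.1). -/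
noncomputable def pAlphaSys (u : ℂ) (E : ℕ) (mm : ℕ → ℕ) (vv : ℕ → ℕ → ℂ)
    (γ : ℕ → Multiset ℕ) : ℂ :=
  ∏ k ∈ Finset.range E, ((γ k).map fun r => pGenSys u E mm vv k r).prod

/-- the Schur function `s_γ` of an `E`-tuple of partitions. -/
noncomputable def sAlphaSys (E : ℕ) (mm : ℕ → ℕ) (vv : ℕ → ℕ → ℂ) (γ : ℕ → Multiset ℕ) : ℂ :=
  ∏ k ∈ Finset.range E, schurFin (mm k) (γ k) (vv k)

/-- the monomial symmetric function `m_γ` of an `E`-tuple of partitions. -/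
noncomputable def mAlphaSys (E : ℕ) (mm : ℕ → ℕ) (vv : ℕ → ℕ → ℂ) (γ : ℕ → Multiset ℕ) : ℂ :=
  ∏ k ∈ Finset.range E, monoFin (mm k) (γ k) (vv k)

/-- the function `q_{r,±}^{(k)}(x;t)` of [S], (3.1.1). -/
noncomputable def qGenSys (t : ℂ) (E : ℕ) (mm : ℕ → ℕ) (vv : ℕ → ℕ → ℂ)
    (sgn : Bool) (k r : ℕ) : ℂ :=
  if r = 0 then 1 else
    let k' := if sgn then (k + 1) % E else (k + E - 1) % E
    ∑ i ∈ Finset.range (mm k),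
      vv k i ^ ((r : ℤ) + (mm k : ℤ) - 1 - (mm k' : ℤ)) *
        (∏ jj ∈ Finset.range (mm k'), (vv k i - t * vv k' jj)) /
        ∏ jj ∈ (Finset.range (mm k)).erase i, (vv k i - vv k jj)

/-- the function `q_{γ,±}(x;t)` of [S], (3.1.2). -/
noncomputable def qAlphaSys (t : ℂ) (E : ℕ) (mm : ℕ → ℕ) (vv : ℕ → ℕ → ℂ)
    (sgn : Bool) (γ : ℕ → Multiset ℕ) : ℂ :=
  ∏ k ∈ Finset.range E, ((γ k).map fun r => qGenSys t E mm vv sgn k r).prod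

/-- `z_β = ∏ i^{n_i} n_i!` for a partition `β = (1^{n_1} 2^{n_2} ⋯)`. -/
noncomputable def zPart (μ : Multiset ℕ) : ℂ :=
  ∏ i ∈ μ.toFinset, (i : ℂ) ^ (μ.count i) * (Nat.factorial (μ.count i) : ℂ)

/-- `z_γ(t) = z_γ ∏_{k,j} (1 - u^k t^{γ_j^{(k)}})⁻¹` for an `E`-tuple of
partitions `γ` (`u` the `E`-th root of unity), cf. (3.1.3). -/
noncomputable def zClassSys (u t : ℂ) (E : ℕ) (γ : ℕ → Multiset ℕ) : ℂ :=
  ((E : ℂ) ^ (∑ k ∈ Finset.range E, (γ k).card)) * (∏ k ∈ Finset.range E, zPart (γ k)) *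
    (∏ k ∈ Finset.range E, ((γ k).map fun r => (1 - u ^ k * t ^ r)).prod)⁻¹

/-! ### the `j`-th pieces attached to an e-partition -/

/-- the truncation `α{j} = (α^{(0)},…,α^{(j₁d-1)})` (used when `c_{α,p} ∣ j`). -/
noncomputable def braceF (e : ℕ) [NeZero e] (p d : ℕ) (j : ℕ) (α : ZMod e → Multiset ℕ) :
    ℕ → Multiset ℕ :=
  fun k => if k < Esys p d j then α ((k : ℕ) : ZMod e) else 0

/-- the `j₁d`-partition `α[j]` of `n/h` (condition (2.6.1)): component `k/h`
has parts `α_i^{(k)}/h`. -/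
noncomputable def bracketF (e : ℕ) [NeZero e] (p d : ℕ) (j : ℕ) (α : ZMod e → Multiset ℕ) :
    ℕ → Multiset ℕ :=
  fun k' => if k' < Esys p d j then (α (((hOrd p j * k' : ℕ) : ZMod e))).map (fun r => r / hOrd p j)
  else 0

/-- condition (2.6.1): `h_j` divides all parts `α_i^{(k)}`, and `h_j ∣ k`
whenever `α^{(k)} ≠ ∅`. -/
def Cond261 (e : ℕ) [NeZero e] (p j : ℕ) (α : ZMod e → Multiset ℕ) : Prop :=
  (∀ k, ∀ r ∈ α k, hOrd p j ∣ r) ∧ ∀ k : ZMod e, α k ≠ 0 → hOrd p j ∣ k.val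

/-- `s_{α{j}}(𝒳_j)`. -/
noncomputable def schurBrace (e : ℕ) [NeZero e] (p d : ℕ) (m : ZMod e → ℕ) (xv : BIdx e m → ℂ)
    (j : ℕ) (α : ZMod e → Multiset ℕ) : ℂ :=
  sAlphaSys (Esys p d j) (mmX e m) (vvX e p d m xv j) (braceF e p d j α)

/-- `p_{α[j]}(𝒳_j)` (2.6; the root of unity for the system `𝒳_j` is `ζ^h`). -/
noncomputable def pBracket (e : ℕ) [NeZero e] (p d : ℕ) (ζ : ℂ) (m : ZMod e → ℕ)
    (xv : BIdx e m → ℂ) (j : ℕ) (α : ZMod e → Multiset ℕ) : ℂ :=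
  pAlphaSys (ζ ^ hOrd p j) (Esys p d j) (mmX e m) (vvX e p d m xv j) (bracketF e p d j α)

/-- `l(α[j])`. -/
noncomputable def lenBracket (e : ℕ) [NeZero e] (p d : ℕ) (j : ℕ)
    (α : ZMod e → Multiset ℕ) : ℕ :=
  ∑ k ∈ Finset.range (Esys p d j), (bracketF e p d j α k).card

/-! ### Schur functions and power sums for `σ^q W` (2.10) -/

/-- the `j`-th component `s^j_{α,φ}` of the Schur function `𝐬_{α,φ}` for
`σ^q W` (2.10.1); the character `φ = φ_r` of `Γ_α = ⟨τ^c⟩ ≅ ℤ/(p/c)ℤ` is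
encoded by `r`, via `φ_r(τ^j) = ζ^{drj}` for `c ∣ j`. -/
noncomputable def sTuple (e : ℕ) [NeZero e] (p d q : ℕ) (ζ : ℂ) (m : ZMod e → ℕ)
    (xv : BIdx e m → ℂ) (α : ZMod e → Multiset ℕ) (r : ℕ) (j : ℕ) : ℂ :=
  if csize e d α ∣ j then
    ζ ^ (d * r * j) *
      ∑ i ∈ Finset.range (csize e d α),
        ζ ^ (q * i * d) * schurBrace e p d m xv j ((theta e d)^[i] α)
  else 0

/-- the `j`-th component `p^j_{β,b}` of the power sum `𝐩_{β,b}` for `σ^q W`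
(2.10.2). -/
noncomputable def pTuple (e : ℕ) [NeZero e] (p d : ℕ) (ζ : ℂ) (m : ZMod e → ℕ)
    (xv : BIdx e m → ℂ) (β : ZMod e → Multiset ℕ) (b : ZMod e) (j : ℕ) : ℂ :=
  if Cond261 e p j β then
    (hOrd p j : ℂ) ^ (lenBracket e p d j β) *
      zmpow e ζ (-(((Delta e β : ZMod e) + b) * ((j * d : ℕ) : ZMod e))) *
      pBracket e p d ζ m xv j β
  else 0

/-! ## The model for (extensions of) the irreducible characters of `W` -/

/-- trace of `f` on a subspace (junk `0` if not invariant). -/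
noncomputable def traceOn {V : Type*} [AddCommGroup V] [Module ℂ V]
    (S : Submodule ℂ V) (f : V →ₗ[ℂ] V) : ℂ :=
  if h : ∀ v ∈ S, f v ∈ S then LinearMap.trace ℂ S (f.restrict h) else 0

/-- the scalar by which the torus element `diag dv ∈ G` acts on a highest
weight vector of weight `α`. -/
noncomputable def weightOf (e : ℕ) [NeZero e] (m : ZMod e → ℕ) (α : ZMod e → Multiset ℕ)
    (dv : BIdx e m → ℂ) : ℂ :=
  ∏ b : BIdx e m, dv b ^ (lamOf (α b.1) b.2.val)

/-- the space of highest weight vectors of weight `α` in `V^{⊗n}`: the model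
for the irreducible `W̃`-module `Z_α` (1.3.1, 1.4). -/
noncomputable def hwSubmodule (e n : ℕ) [NeZero e] (m : ZMod e → ℕ)
    (α : ZMod e → Multiset ℕ) : Submodule ℂ (TIdx e n m → ℂ) :=
  (⨅ g ∈ {g | IsUpperUni e m g},
      Module.End.eigenspace (Matrix.mulVecLin (tensorPow e n m g)) 1) ⊓
    ⨅ dv : BIdx e m → ℂ,
      Module.End.eigenspace (Matrix.mulVecLin (tensorPow e n m (Matrix.diagonal dv)))
        (weightOf e m α dv)

/-- the model for the irreducible `W`-module `Z_{α,φ_r}`: the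
`φ_r(τ^c)`-eigenspace of `τ^c` on `Z_α`, where `c = c_{α,p}` and
`φ_r(τ^c) = ζ^{cdr}`. -/
noncomputable def ZSub (e n : ℕ) [NeZero e] (d : ℕ) (m : ZMod e → ℕ)
    (hm : ∀ k, m (k + (d : ZMod e)) = m k) (ζ : ℂ) (α : ZMod e → Multiset ℕ) (r : ℕ) :
    Submodule ℂ (TIdx e n m → ℂ) :=
  hwSubmodule e n m α ⊓
    Module.End.eigenspace (Matrix.mulVecLin ((tauMat e n d m hm) ^ (csize e d α)))
      (ζ ^ (csize e d α * d * r))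

/-- The model for the irreducible character `χ^{α,φ_r}` of `W` and for its
chosen extension `χ̃^{α,φ_r}` to `⟨σ^q⟩ ⋉ W`: the trace of `w` on the model
`Z_{α,φ_r} ⊆ V^{⊗n}`. -/
noncomputable def charExt (e n : ℕ) [NeZero e] (d : ℕ) (m : ZMod e → ℕ)
    (hm : ∀ k, m (k + (d : ZMod e)) = m k) (ζ : ℂ) (α : ZMod e → Multiset ℕ) (r : ℕ)
    (w : Wt e n) : ℂ :=
  traceOn (ZSub e n d m hm ζ α r) (Matrix.mulVecLin (rhoMat e n ζ m w))

/-! ## symbols, a-function, similarity; the reflection representation -/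

/-- the multiset of entries of the symbol `Λ(α) = α + Λ⁰` of type `(r,0)`. -/
noncomputable def entriesSym (e : ℕ) [NeZero e] (m : ZMod e → ℕ) (rsym : ℕ)
    (α : ZMod e → Multiset ℕ) : Multiset ℕ :=
  (Finset.univ : Finset (BIdx e m)).val.map fun b =>
    lamOf (α b.1) b.2.val + rsym * (m b.1 - 1 - b.2.val)

noncomputable def pairMinSum (M : Multiset ℕ) : ℕ :=
  (M.bind fun a => M.map fun b => min a b).sum

/-- the `a`-function (3.5.2) on symbols of type `(rsym, 0)`. -/
noncomputable def aVal (e : ℕ) [NeZero e] (m : ZMod e → ℕ) (rsym : ℕ)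
    (α : ZMod e → Multiset ℕ) : ℕ :=
  pairMinSum (entriesSym e m rsym α) - pairMinSum (entriesSym e m rsym (fun _ => 0))

/-- similarity of symbols: equality of entries with multiplicities. -/
def SimSym (e : ℕ) [NeZero e] (m : ZMod e → ℕ) (rsym : ℕ) (α β : ZMod e → Multiset ℕ) : Prop :=
  entriesSym e m rsym α = entriesSym e m rsym β

/-- the reflection representation `M = ℂ^n` of `W̃` (`w(e_i) = ζ^{a_i} e_{x(i)}`). -/
noncomputable def refMat (e n : ℕ) [NeZero e] (ζ : ℂ) (w : Wt e n) :
    Matrix (Fin n) (Fin n) ℂ :=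
  fun i' i => if i' = w.right i then zmpow e ζ (w.left i').toAdd else 0

/-- The functional `R_q(f)` of (4.2.1), for a function `f` on the coset `σ^q W`. -/
noncomputable def Rq (e p d n : ℕ) [NeZero e] [NeZero n] (hp : p ∣ e) (ζ t : ℂ) (q : ℕ)
    (f : Wt e n → ℂ) : ℂ :=
  (ζ ^ (q * d) * t ^ (d * n) - 1) * (∏ i ∈ Finset.Icc 1 (n - 1), (t ^ (e * i) - 1)) *
    (Nat.card (Wgrp e p n hp) : ℂ)⁻¹ *
    ∑ w ∈ Finset.univ.filter (fun w => inCoset e p n hp q w),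
      (refMat e n ζ w).det * f w / (t • (1 : Matrix (Fin n) (Fin n) ℂ) - refMat e n ζ w).det

/-- `N^*`: the number of reflections in `W`. -/
noncomputable def Nstar (e p n : ℕ) [NeZero e] (hp : p ∣ e) (ζ : ℂ) : ℕ :=
  Nat.card {w : Wt e n // w ∈ Wgrp e p n hp ∧ w ≠ 1 ∧ (refMat e n ζ w - 1).rank = 1}

end GreenII
namespace GreenII

/-!
The operator `D τ^j w` sends each basis tensor to a multiple of a basis tensor, so its trace is the
sum of the multipliers over the basis tensors that it preserves up to a scalar. As `w` permutes the
factors by the cycle `z`, such a tensor is `v ⊗ τ^j v ⊗ τ^{2j} v ⊗ ⋯` for a basis vector `v` with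
`τ^{nj} v = v`, and this happens for no `v` unless `h ∣ n`. If `h ∣ n`, then for `v = v_i^{(k)}`,
since the variables along `v, τ^j v, τ^{2j} v, …` repeat after `h` steps, `D` contributes
`(X_i^{(k)})^{n/h}`. The first and the last factor of the tensor are moved by `z` from `V_{k-jd}`
and `V_{k-2jd}`, so that `t_1^a t_n^b` contributes `ζ^{a(k-jd)+b(k-2jd)} = ζ^{-(f+b)jd} ζ^{fk}`.
Finally `p_r(𝒳_j^{(k)})` has period `j₁d = e/h` in `k ∈ ℤ/eℤ`. Translating `k` by `j₁d` thus
multiplies the sum over `k` by `ζ^{f j₁ d}`; this kills it unless `h ∣ f`, in which case it is `h`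
times the sum over `0 ≤ k < j₁d`.
-/

open Function Finset

section MonomialMatrix

variable {ι R : Type*} [DecidableEq ι]

/-- The matrix of the operator sending the basis vector `e_i` to `c i • e_{T i}`; the map `T` need
not be injective. -/
def monomialMatrix [Zero R] (T : ι → ι) (c : ι → R) : Matrix ι ι R :=
  Matrix.of fun i' i => if i' = T i then c i else 0

theorem diagonal_eq_monomialMatrix [Zero R] (c : ι → R) :
    Matrix.diagonal c = monomialMatrix id c := by
  ext i' i
  simp only [Matrix.diagonal_apply, monomialMatrix, Matrix.of_apply, id_eq]
  split_ifs with h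
  · rw [h]
  · rfl

variable [Fintype ι]

theorem monomialMatrix_mul [NonUnitalNonAssocSemiring R] (S T : ι → ι) (c c' : ι → R) :
    monomialMatrix S c * monomialMatrix T c' =
      monomialMatrix (S ∘ T) fun i => c (T i) * c' i := by
  ext i' i
  simp [monomialMatrix, Matrix.mul_apply]

theorem monomialMatrix_one_pow [Semiring R] (T : ι → ι) (j : ℕ) :
    monomialMatrix T (1 : ι → R) ^ j = monomialMatrix T^[j] 1 := by
  induction j with
  | zero => rw [pow_zero, ← Matrix.diagonal_one, diagonal_eq_monomialMatrix]; rfl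
  | succ j ih =>
    rw [pow_succ, ih, monomialMatrix_mul, iterate_succ]
    simp only [Pi.one_apply, mul_one]
    rfl

theorem trace_monomialMatrix [AddCommMonoid R] (T : ι → ι) (c : ι → R) :
    (monomialMatrix T c).trace = ∑ i with T i = i, c i := by
  simp [Matrix.trace, monomialMatrix, sum_filter, eq_comm]

end MonomialMatrix

section TensorSpace

variable {e n : ℕ} [NeZero e] {m : ZMod e → ℕ}

theorem tensorPow_monomialMatrix (T : BIdx e m → BIdx e m) (c : BIdx e m → ℂ) :
    tensorPow e n m (monomialMatrix T c) =
      monomialMatrix (Pi.map fun _ : Fin n => T) fun b => ∏ s, c (b s) := by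
  ext b' b
  simp [tensorPow, monomialMatrix, Fintype.prod_ite_zero, funext_iff]

theorem tauMat_pow_eq_monomialMatrix (d : ℕ) (hm : ∀ k, m (k + (d : ZMod e)) = m k) (j : ℕ) :
    tauMat e n d m hm ^ j = monomialMatrix (Pi.map fun _ : Fin n => (tauB e d m hm)^[j]) 1 := by
  have htau : tauMat e n d m hm = monomialMatrix (Pi.map fun _ : Fin n => tauB e d m hm) 1 := by
    have hV : tauV e d m hm = monomialMatrix (tauB e d m hm) 1 := rfl
    rw [tauMat, hV, tensorPow_monomialMatrix]
    simp only [Pi.one_apply, prod_const_one]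
    rfl
  rw [htau, monomialMatrix_one_pow, Pi.map_iterate]

theorem rhoMat_eq_monomialMatrix (ζ : ℂ) (w : Wt e n) :
    rhoMat e n ζ m w = monomialMatrix (fun b => b ∘ w.right.symm) fun b =>
      ∏ s, ζ ^ ((w.left s).toAdd.val * (b (w.right.symm s)).1.val) := by
  ext b' b
  simp only [rhoMat, monomialMatrix, Matrix.of_apply]
  split_ifs with h
  · rw [h]; rfl
  · rfl

theorem trace_Dmat_mul_tauMat_pow_mul_rhoMat (d : ℕ) (ζ : ℂ)
    (hm : ∀ k, m (k + (d : ZMod e)) = m k) (xv : BIdx e m → ℂ) (j : ℕ) (w : Wt e n) :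
    (Dmat e n m xv * tauMat e n d m hm ^ j * rhoMat e n ζ m w).trace =
      ∑ b : TIdx e n m with (tauB e d m hm)^[j] ∘ b ∘ w.right.symm = b,
        (∏ s, xv (b s)) * ∏ s, ζ ^ ((w.left s).toAdd.val * (b (w.right.symm s)).1.val) := by
  rw [Dmat, diagonal_eq_monomialMatrix, tauMat_pow_eq_monomialMatrix, rhoMat_eq_monomialMatrix,
    monomialMatrix_mul, monomialMatrix_mul, trace_monomialMatrix]
  refine sum_congr rfl fun b hb => ?_
  have hfix : (tauB e d m hm)^[j] ∘ b ∘ w.right.symm = b := (mem_filter.1 hb).2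
  have htarget : (Pi.map fun _ => (tauB e d m hm)^[j]) (b ∘ w.right.symm) = b := hfix
  simp only [htarget, Pi.one_apply, mul_one]

end TensorSpace

section Periodicity

variable {M : Type*} [CommMonoid M]

@[to_additive sum_range_mul_of_periodic]
theorem prod_range_mul_of_periodic {F : ℕ → M} {h : ℕ} (hF : Periodic F h) (r : ℕ) :
    ∏ s ∈ range (h * r), F s = (∏ s ∈ range h, F s) ^ r := by
  have hshift (t s : ℕ) : F (h * t + s) = F s := by
    rw [add_comm, mul_comm]
    exact hF.nat_mul t s
  induction r with
  | zero => simp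
  | succ r ih => simp only [Nat.mul_succ, prod_range_add, ih, hshift, pow_succ]

theorem periodic_prod_range_add_mul {R : Type*} [Semiring R] {δ : R} {h : ℕ} (hδ : h * δ = 0)
    (φ : R → M) : Periodic (fun x => ∏ s ∈ range h, φ (x + s * δ)) δ := by
  intro x
  cases h with
  | zero => simp
  | succ h =>
    have hwrap : x + δ + h * δ = x := by
      rw [add_assoc, add_comm δ, ← add_one_mul, ← Nat.cast_succ, hδ, add_zero]
    have hshift (s : ℕ) : x + δ + s * δ = x + (s + 1 : ℕ) * δ := by
      rw [Nat.cast_succ, add_one_mul, add_assoc, add_comm δ]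
    simp only
    rw [prod_range_succ, prod_range_succ', hwrap]
    simp only [hshift, Nat.cast_zero, zero_mul, add_zero]

end Periodicity

section CharacterSums

variable {A R : Type*} [CommRing R]

theorem sum_zmod_eq_sum_range {N : Type*} [AddCommMonoid N] (e : ℕ) [NeZero e] (F : ZMod e → N) :
    ∑ k, F k = ∑ k ∈ range e, F k :=
  sum_nbij' ZMod.val (fun k => (k : ZMod e)) (fun k _ => mem_range.2 k.val_lt)
    (fun _ _ => mem_univ _) (fun k _ => ZMod.natCast_zmod_val k)
    (fun _ hk => ZMod.val_cast_of_lt (mem_range.1 hk))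
    (fun k _ => by rw [ZMod.natCast_zmod_val])

theorem sum_eq_zero_of_map_add_eq_mul [IsDomain R] [AddGroup A] [Fintype A] {F : A → R} {c : A}
    {u : R} (hu : u ≠ 1) (hF : ∀ x, F (x + c) = u * F x) : ∑ x, F x = 0 := by
  have hsum : ∑ x, F x = u * ∑ x, F x := by
    rw [mul_sum, ← Equiv.sum_comp (Equiv.addRight c)]
    exact sum_congr rfl fun x _ => hF x
  exact (mul_left_eq_self₀.1 hsum.symm).resolve_left hu

theorem sum_zmodChar_mul_of_periodic [IsDomain R] {e E h : ℕ} [NeZero e] (he : E * h = e) {ζ : R}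
    (hζ : IsPrimitiveRoot ζ e) (f : ℕ) {G : ZMod e → R} (hG : Periodic G (E : ZMod e)) :
    ∑ k, AddChar.zmodChar e hζ.pow_eq_one (f * k) * G k =
      if h ∣ f then h * ∑ k ∈ range E, ζ ^ (f * k) * G k else 0 := by
  set χ := AddChar.zmodChar e hζ.pow_eq_one
  have hχ (N : ℕ) : χ N = ζ ^ N := AddChar.zmodChar_apply' _ N
  have hshift (k : ZMod e) : χ (f * (k + E)) * G (k + E) = ζ ^ (f * E) * (χ (f * k) * G k) := by
    rw [hG, mul_add, χ.map_add_eq_mul, ← Nat.cast_mul, hχ]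
    ring
  have hE : 0 < E := Nat.pos_of_ne_zero fun h0 => NeZero.ne e (by rw [← he, h0, zero_mul])
  have hroot : ζ ^ (f * E) = 1 ↔ h ∣ f := by
    rw [hζ.pow_eq_one_iff_dvd, ← he, mul_comm f, Nat.mul_dvd_mul_iff_left hE]
  split_ifs with hf
  · have hper : Periodic (fun k : ℕ => χ (f * k) * G k) E := fun k => by
      simp only
      rw [Nat.cast_add, hshift, hroot.2 hf, one_mul]
    rw [sum_zmod_eq_sum_range, ← congrArg range he, sum_range_mul_of_periodic hper, nsmul_eq_mul]
    simp only [← Nat.cast_mul, hχ]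
  · exact sum_eq_zero_of_map_add_eq_mul (mt hroot.1 hf) hshift

theorem addChar_map_sum {ι : Type*} [AddCommMonoid A] (χ : AddChar A R) (s : Finset ι)
    (g : ι → A) : χ (∑ i ∈ s, g i) = ∏ i ∈ s, χ (g i) :=
  map_prod χ.toMonoidHom (fun i => Multiplicative.ofAdd (g i)) s

theorem prod_pow_val_mul_val {ι : Type*} [Fintype ι] {e : ℕ} [NeZero e] {ζ : R} (hζ : ζ ^ e = 1)
    (g c : ι → ZMod e) :
    ∏ i, ζ ^ ((g i).val * (c i).val) = AddChar.zmodChar e hζ (∑ i, g i * c i) := by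
  rw [addChar_map_sum]
  refine prod_congr rfl fun i _ => ?_
  rw [← AddChar.zmodChar_apply' hζ, Nat.cast_mul, ZMod.natCast_zmod_val, ZMod.natCast_zmod_val]

end CharacterSums

section CyclicTensors

variable {n : ℕ} {B : Type*}

theorem iterate_finRotate_apply {T : B → B} {x : B} (hx : IsPeriodicPt T n x) (s : Fin n) :
    T^[finRotate n s] x = T (T^[s] x) := by
  rw [← iterate_succ_apply' T, finRotate_apply, Fin.val_add, Fin.val_one', Nat.add_mod_mod,
    hx.iterate_mod_apply]

variable [NeZero n]

open Fin.NatCast in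
theorem comp_finRotate_symm_eq_self_iff {T : B → B} {b : Fin n → B} :
    T ∘ b ∘ (finRotate n).symm = b ↔
      IsPeriodicPt T n (b 0) ∧ b = fun s : Fin n => T^[s] (b 0) := by
  rw [← comp_assoc, Equiv.comp_symm_eq]
  constructor
  · intro hb
    have hcast (s : ℕ) : b (s : Fin n) = T^[s] (b 0) := by
      induction s with
      | zero => simp
      | succ s ih =>
        rw [iterate_succ_apply', ← ih, Nat.cast_succ, ← finRotate_apply]
        exact (congrFun hb _).symm
    refine ⟨?_, funext fun s => ?_⟩
    · rw [IsPeriodicPt, IsFixedPt, ← hcast, Fin.natCast_self]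
    · rw [← hcast, Fin.cast_val_eq_self]
  · rintro ⟨hper, hb⟩
    funext s
    rw [hb]
    exact (iterate_finRotate_apply hper s).symm

theorem sum_comp_finRotate_symm_eq_self {R : Type*} [AddCommMonoid R] [Fintype B] (T : B → B)
    [DecidablePred fun b : Fin n → B => T ∘ b ∘ (finRotate n).symm = b]
    [DecidablePred (IsPeriodicPt T n)] (F : (Fin n → B) → R) :
    ∑ b : Fin n → B with T ∘ b ∘ (finRotate n).symm = b, F b =
      ∑ x with IsPeriodicPt T n x, F fun s => T^[s] x := by
  refine sum_bij' (fun b _ => b 0) (fun x _ s => T^[s] x) ?_ ?_ ?_ ?_ ?_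
  all_goals simp only [mem_filter_univ, comp_finRotate_symm_eq_self_iff]
  · exact fun b hb => hb.1
  · exact fun x hx => ⟨hx, rfl⟩
  · exact fun b hb => hb.2.symm
  · exact fun x _ => rfl
  · exact fun b hb => congrArg F hb.2

/-- The exponents of `t_1, …, t_n` in `t_1^a t_n^b`; for `n = 1` both land on `t_1`. -/
def endColors {A : Type*} [AddMonoid A] (a b : A) (s : Fin n) : A :=
  (if s = 0 then a else 0) + if (s : ℕ) = n - 1 then b else 0

theorem sum_endColors_mul {A : Type*} [CommRing A] (a b : A) {δ : A} {c : Fin n → A}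
    (hc : ∀ s, c (finRotate n s) = c s + δ) :
    ∑ s, endColors a b s * c ((finRotate n).symm s) = (a + b) * c 0 - (a + b + b) * δ := by
  obtain ⟨N, rfl⟩ := Nat.exists_eq_succ_of_ne_zero (NeZero.ne n)
  have hc_symm (s) : c ((finRotate (N + 1)).symm s) = c s - δ := by
    rw [eq_sub_iff_add_eq, ← hc, Equiv.apply_symm_apply]
  have hlast : c (Fin.last N) = c 0 - δ := by
    rw [eq_sub_iff_add_eq, ← hc, finRotate_last]
  have hlast_iff (s : Fin (N + 1)) : (s : ℕ) = N + 1 - 1 ↔ s = Fin.last N :=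
    (Fin.ext_iff (b := Fin.last N)).symm
  simp only [endColors, hlast_iff, add_mul, ite_mul, zero_mul, sum_add_distrib, sum_ite_eq',
    mem_univ, if_true, hc_symm, hlast]
  ring

end CyclicTensors

section TauOrbits

variable {e : ℕ} [NeZero e] {p d : ℕ} {m : ZMod e → ℕ}

theorem tauB_iterate_fst (hm : ∀ k, m (k + (d : ZMod e)) = m k) (s : ℕ) (x : BIdx e m) :
    ((tauB e d m hm)^[s] x).1 = x.1 + s * d := by
  induction s with
  | zero => simp
  | succ s ih =>
    rw [iterate_succ_apply']
    change ((tauB e d m hm)^[s] x).1 + (d : ZMod e) = _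
    rw [ih, Nat.cast_succ, add_one_mul, add_assoc]

theorem tauB_iterate_snd_val (hm : ∀ k, m (k + (d : ZMod e)) = m k) (s : ℕ) (x : BIdx e m) :
    ((tauB e d m hm)^[s] x).2.val = x.2.val := by
  induction s with
  | zero => rfl
  | succ s ih => rw [iterate_succ_apply', tauB, Fin.val_cast, ih]

theorem xv_tauB_iterate (hm : ∀ k, m (k + (d : ZMod e)) = m k) (xv : BIdx e m → ℂ) (s : ℕ)
    (x : BIdx e m) : xv ((tauB e d m hm)^[s] x) = xval e m xv (x.1 + s * d) x.2 := by
  rw [← tauB_iterate_fst hm, ← tauB_iterate_snd_val hm s, xval, dif_pos (Fin.is_lt _)]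

theorem isPeriodicPt_tauB_iff (hm : ∀ k, m (k + (d : ZMod e)) = m k) {s : ℕ} {x : BIdx e m} :
    IsPeriodicPt (tauB e d m hm) s x ↔ (s * d : ZMod e) = 0 := by
  constructor
  · intro hx
    simpa [tauB_iterate_fst] using congrArg Sigma.fst hx.eq
  · intro hs
    have hfst : ((tauB e d m hm)^[s] x).1 = x.1 := by rw [tauB_iterate_fst, hs, add_zero]
    exact Sigma.ext hfst ((Fin.heq_ext_iff (congrArg m hfst)).2 (tauB_iterate_snd_val hm s x))

theorem hOrd_dvd_iff (he : p * d = e) {j s : ℕ} : hOrd p j ∣ s ↔ (s * (j * d) : ZMod e) = 0 := by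
  have hd : 0 < d := Nat.pos_of_ne_zero fun h0 => NeZero.ne e (by rw [← he, h0, mul_zero])
  rw [hOrd, addOrderOf_dvd_iff_nsmul_eq_zero, nsmul_eq_mul, ← mul_assoc]
  norm_cast
  rw [ZMod.natCast_eq_zero_iff, ZMod.natCast_eq_zero_iff, ← he, Nat.mul_dvd_mul_iff_right hd]

theorem isPeriodicPt_tauB_iterate_iff (he : p * d = e) (hm : ∀ k, m (k + (d : ZMod e)) = m k)
    {j s : ℕ} {x : BIdx e m} : IsPeriodicPt (tauB e d m hm)^[j] s x ↔ hOrd p j ∣ s := by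
  rw [IsPeriodicPt, ← iterate_mul, ← IsPeriodicPt, isPeriodicPt_tauB_iff, hOrd_dvd_iff he,
    Nat.cast_mul, mul_comm (j : ZMod e), mul_assoc]

theorem Esys_eq_gcd_mul (hp : p ≠ 0) (d j : ℕ) : Esys p d j = p.gcd j * d := by
  rw [Esys, hOrd, ZMod.addOrderOf_coe j hp, Nat.div_div_self (p.gcd_dvd_left j) hp]

theorem Esys_mul_hOrd (p d j : ℕ) : Esys p d j * hOrd p j = p * d := by
  have hdvd : hOrd p j ∣ p := addOrderOf_dvd_of_nsmul_eq_zero (by simp)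
  rw [Esys, mul_right_comm, Nat.div_mul_cancel hdvd]

theorem exists_Esys_eq_intCast_mul (he : p * d = e) (j : ℕ) :
    ∃ t : ℤ, (Esys p d j : ZMod e) = t * (j * d) := by
  have hp : p ≠ 0 := fun h0 => NeZero.ne e (by rw [← he, h0, zero_mul])
  have hpd : (p * d : ZMod e) = 0 := by rw [← Nat.cast_mul, he, ZMod.natCast_self]
  have hbezout := congrArg (Int.cast : ℤ → ZMod e) (Nat.gcd_eq_gcd_ab p j)
  push_cast at hbezout
  refine ⟨p.gcdB j, ?_⟩
  rw [Esys_eq_gcd_mul hp, Nat.cast_mul, hbezout]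
  linear_combination (p.gcdA j : ZMod e) * hpd

variable (p d)

/-- The variable `X_i^{(k)}` of the system `𝒳_j`, for every `k : ZMod e` and not only for
`0 ≤ k < j₁d`. -/
noncomputable def orbitVar (xv : BIdx e m → ℂ) (j : ℕ) (k : ZMod e) (i : ℕ) : ℂ :=
  ∏ s ∈ range (hOrd p j), xval e m xv (k + s * (j * d)) i

/-- The power sum `p_r(𝒳_j^{(k)})`, for every `k : ZMod e`. -/
noncomputable def orbitPowerSum (xv : BIdx e m → ℂ) (j r : ℕ) (k : ZMod e) : ℂ :=
  ∑ i ∈ range (m k), orbitVar p d xv j k i ^ r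

variable {p d}

theorem periodic_orbitVar (he : p * d = e) (xv : BIdx e m → ℂ) (j i : ℕ) :
    Periodic (fun k => orbitVar p d xv j k i) (j * d : ZMod e) :=
  periodic_prod_range_add_mul ((hOrd_dvd_iff he).1 dvd_rfl) fun k => xval e m xv k i

theorem periodic_orbitPowerSum (he : p * d = e) (hm : ∀ k, m (k + (d : ZMod e)) = m k)
    (xv : BIdx e m → ℂ) (j r : ℕ) :
    Periodic (orbitPowerSum p d xv j r) (Esys p d j : ZMod e) := by
  have hm_period : Periodic m (j * d : ZMod e) := Periodic.nat_mul hm j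
  have hsum_period : Periodic (orbitPowerSum p d xv j r) (j * d : ZMod e) := fun k => by
    rw [orbitPowerSum, orbitPowerSum, hm_period]
    exact sum_congr rfl fun i _ => congrArg (· ^ r) (periodic_orbitVar he xv j i k)
  obtain ⟨t, ht⟩ := exists_Esys_eq_intCast_mul he j
  exact ht ▸ hsum_period.int_mul t

theorem pGenSys_eq_sum_orbitPowerSum (ζ : ℂ) (xv : BIdx e m → ℂ) (j f : ℕ) {r : ℕ} (hr : r ≠ 0) :
    pGenSys ζ (Esys p d j) (mmX e m) (vvX e p d m xv j) f r =
      ∑ k ∈ range (Esys p d j), ζ ^ (f * k) * orbitPowerSum p d xv j r k := by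
  simp only [pGenSys, if_neg hr, mmX, vvX, Xvar, orbitPowerSum, orbitVar, Nat.cast_add,
    Nat.cast_mul, mul_assoc]

theorem prod_xv_tauB_iterate (he : p * d = e) (hm : ∀ k, m (k + (d : ZMod e)) = m k)
    (xv : BIdx e m → ℂ) {j n : ℕ} (hn : hOrd p j ∣ n) (x : BIdx e m) :
    ∏ s : Fin n, xv (((tauB e d m hm)^[j])^[s] x) =
      orbitVar p d xv j x.1 x.2 ^ (n / hOrd p j) := by
  have hwrap := (hOrd_dvd_iff he).1 (dvd_refl (hOrd p j))
  have hper : Periodic (fun s : ℕ => xval e m xv (x.1 + s * (j * d)) x.2) (hOrd p j) := fun s => by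
    simp only [Nat.cast_add, add_mul, hwrap, add_zero]
  have hxv (s : ℕ) : xv (((tauB e d m hm)^[j])^[s] x) = xval e m xv (x.1 + s * (j * d)) x.2 := by
    rw [← iterate_mul, xv_tauB_iterate hm xv, mul_comm j, Nat.cast_mul, mul_assoc]
  simp only [hxv]
  rw [← prod_range fun s => xval e m xv (x.1 + s * (j * d)) x.2,
    ← congrArg range (Nat.mul_div_cancel' hn), prod_range_mul_of_periodic hper, orbitVar]

theorem prod_pow_endColors_mul_tauB_iterate (he : p * d = e)
    (hm : ∀ k, m (k + (d : ZMod e)) = m k) {ζ : ℂ} (hζ : ζ ^ e = 1) {j n : ℕ} [NeZero n]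
    (hn : hOrd p j ∣ n) (a b : ZMod e) (x : BIdx e m) :
    ∏ s : Fin n, ζ ^ ((endColors a b s).val *
        (((tauB e d m hm)^[j])^[(finRotate n).symm s] x).1.val) =
      zmpow e ζ (-((a + b + b) * (j * d : ℕ))) * AddChar.zmodChar e hζ ((a + b) * x.1) := by
  set c : Fin n → ZMod e := fun s => (((tauB e d m hm)^[j])^[s] x).1
  have hc (s : Fin n) : c (finRotate n s) = c s + (j * d : ℕ) := by
    simp only [c]
    rw [iterate_finRotate_apply ((isPeriodicPt_tauB_iterate_iff he hm).2 hn), tauB_iterate_fst,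
      Nat.cast_mul]
  rw [prod_pow_val_mul_val hζ, sum_endColors_mul a b hc, sub_eq_neg_add, AddChar.map_add_eq_mul]
  rfl

theorem sum_zmodChar_mul_orbitVar_pow (he : p * d = e) (hm : ∀ k, m (k + (d : ZMod e)) = m k)
    (xv : BIdx e m → ℂ) {ζ : ℂ} (hζ : IsPrimitiveRoot ζ e) (j f : ℕ) {r : ℕ} (hr : r ≠ 0) :
    ∑ x : BIdx e m, AddChar.zmodChar e hζ.pow_eq_one (f * x.1) * orbitVar p d xv j x.1 x.2 ^ r =
      if hOrd p j ∣ f then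
        hOrd p j * pGenSys ζ (Esys p d j) (mmX e m) (vvX e p d m xv j) f r
      else 0 := by
  rw [pGenSys_eq_sum_orbitPowerSum ζ xv j f hr,
    ← sum_zmodChar_mul_of_periodic ((Esys_mul_hOrd p d j).trans he) hζ f
      (periodic_orbitPowerSum he hm xv j r)]
  simp only [Fintype.sum_sigma, orbitPowerSum, sum_range, mul_sum]

end TauOrbits

theorem statement1_general (e p d n : ℕ) [NeZero e] [NeZero n] (hp : p ∣ e) (hd : d = e / p)
    (ζ : ℂ) (hζ : IsPrimitiveRoot ζ e)
    (m : ZMod e → ℕ) (hm : ∀ k, m (k + (d : ZMod e)) = m k)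
    (xv : BIdx e m → ℂ)
    (a b : ZMod e) (f : ℕ) (hab : a + b = (f : ZMod e))
    (j : ℕ)
    (w : Wt e n)
    (hw : w = ⟨fun i => Multiplicative.ofAdd
        ((if i = (0 : Fin n) then a else 0) + (if (i : ℕ) = n - 1 then b else 0)),
        finRotate n⟩) :
    Matrix.trace (Dmat e n m xv * (tauMat e n d m hm) ^ j * rhoMat e n ζ m w) =
      if hOrd p j ∣ n ∧ hOrd p j ∣ f then
        (hOrd p j : ℂ) * zmpow e ζ (-(((f : ZMod e) + b) * ((j * d : ℕ) : ZMod e))) *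
          pGenSys ζ (Esys p d j) (mmX e m) (vvX e p d m xv j) f (n / hOrd p j)
      else 0 := by
  have he : p * d = e := hd ▸ Nat.mul_div_cancel' hp
  have hcolors (s : Fin n) : (w.left s).toAdd = endColors a b s := by rw [hw]; rfl
  have hright : w.right = finRotate n := by rw [hw]
  simp only [trace_Dmat_mul_tauMat_pow_mul_rhoMat, hcolors, hright,
    sum_comp_finRotate_symm_eq_self, isPeriodicPt_tauB_iterate_iff he hm]
  by_cases hn : hOrd p j ∣ n
  · have hr : n / hOrd p j ≠ 0 := (Nat.div_ne_zero_iff_of_dvd hn).2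
      ⟨NeZero.ne n, ne_zero_of_dvd_ne_zero (NeZero.ne n) hn⟩
    simp only [hn, filter_true, true_and, prod_xv_tauB_iterate he hm xv hn,
      prod_pow_endColors_mul_tauB_iterate he hm hζ.pow_eq_one hn, hab]
    calc
      _ = zmpow e ζ (-((f + b) * (j * d : ℕ))) *
          ∑ x : BIdx e m, AddChar.zmodChar e hζ.pow_eq_one (f * x.1) *
            orbitVar p d xv j x.1 x.2 ^ (n / hOrd p j) := by
        rw [mul_sum]
        exact sum_congr rfl fun x _ => by ring
      _ = _ := by
        rw [sum_zmodChar_mul_orbitVar_pow he hm xv hζ j f hr]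
        split_ifs <;> ring
  · simp only [hn, filter_false, sum_empty, false_and, if_false]

/-- Lemma 2.5.  Let `w ∈ W̃` be an `f`-cycle of length `n`
of the form `w = t_1^a t_n^b z`, `z = (1,2,…,n)`, `a + b ≡ f`.  Then for
`0 ≤ j < p`,
`Tr(Dτ^j w, V^{⊗n}) = h ζ^{-(f+b)jd} p^{(f)}_{n/h}(𝒳_j)` if `h ∣ n` and
`h ∣ f` (`h = h_j`), and `= 0` otherwise. -/
theorem statement1 (e p d n : ℕ) [NeZero e] [NeZero n] (hp : p ∣ e) (hd : d = e / p)
    (ζ : ℂ) (hζ : IsPrimitiveRoot ζ e)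
    (m : ZMod e → ℕ) (hmn : ∀ k, n ≤ m k) (hm : ∀ k, m (k + (d : ZMod e)) = m k)
    (xv : BIdx e m → ℂ)
    (a b : ZMod e) (f : ℕ) (hab : a + b = (f : ZMod e))
    (j : ℕ) (hj : j < p)
    (w : Wt e n)
    (hw : w = ⟨fun i => Multiplicative.ofAdd
        ((if i = (0 : Fin n) then a else 0) + (if (i : ℕ) = n - 1 then b else 0)),
        finRotate n⟩) :
    Matrix.trace (Dmat e n m xv * (tauMat e n d m hm) ^ j * rhoMat e n ζ m w) =
      if hOrd p j ∣ n ∧ hOrd p j ∣ f then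
        (hOrd p j : ℂ) * zmpow e ζ (-(((f : ZMod e) + b) * ((j * d : ℕ) : ZMod e))) *
          pGenSys ζ (Esys p d j) (mmX e m) (vvX e p d m xv j) f (n / hOrd p j)
      else 0 :=
  statement1_general e p d n hp hd ζ hζ m hm xv a b f hab j w hw

end GreenII
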